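/- Let x : Fin 11 → ℝ^10 be a regular 11-simplex and let Y1 be the associated 840-element set of unit vectors, with the graph on Y1 in which y, y' are adjacent iff ⟨y, y'⟩ = α2. Then this graph contains exactly 30240 cliques of order 10. -/

import Mathlib

open RealInnerProductSpace

noncomputable section

/-- The three admissible inner product values (angles). -/
def α1 : ℝ := 4/15
def α2 : ℝ := -1/10
def α3 : ℝ := -7/15

/-- A regular 11-simplex in ℝ^10: eleven unit vectors with pairwise inner
products equal to -1/10. -/
def IsRegularSimplex (x : Fin 11 → EuclideanSpace ℝ (Fin 10)) : Prop :=
  (∀ i, ‖x i‖ = 1) ∧ ∀ i j : Fin 11, i ≠ j → ⟪x i, x j⟫ = -1/10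

/-- The set `Y1`: unit vectors `y` with `⟪x 0, y⟫ = α2` such that among the
indices `i ≠ 0`, exactly six satisfy `⟪x i, y⟫ = α1`, exactly one satisfies
`⟪x i, y⟫ = α2`, and exactly three satisfy `⟪x i, y⟫ = α3`. -/
def Y1set (x : Fin 11 → EuclideanSpace ℝ (Fin 10)) : Set (EuclideanSpace ℝ (Fin 10)) :=
  {y | ‖y‖ = 1 ∧ ⟪x 0, y⟫ = α2 ∧
    {i : Fin 11 | i ≠ 0 ∧ ⟪x i, y⟫ = α1}.ncard = 6 ∧
    {i : Fin 11 | i ≠ 0 ∧ ⟪x i, y⟫ = α2}.ncard = 1 ∧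
    {i : Fin 11 | i ≠ 0 ∧ ⟪x i, y⟫ = α3}.ncard = 3}

/-- A clique of order 10 in the graph on `Y1` in which two distinct vectors are
adjacent iff their inner product equals `α2`. -/
def IsClique10 (x : Fin 11 → EuclideanSpace ℝ (Fin 10))
    (D : Set (EuclideanSpace ℝ (Fin 10))) : Prop :=
  D ⊆ Y1set x ∧ D.ncard = 10 ∧
    ∀ y ∈ D, ∀ y' ∈ D, y ≠ y' → ⟪y, y'⟫ = α2

open Finset

/-- The partial transversals `[(i, g i), …]` over the index list whose entries lie in the candidate
lists `Q i` and are pairwise compatible with respect to `R`. -/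
def transversals {ι β : Type*} (Q : ι → List β) (R : ι → β → ι → β → Bool) :
    List ι → List (List (ι × β))
  | [] => [[]]
  | i :: l => (transversals Q R l).flatMap fun s =>
      ((Q i).filter fun a => s.all fun q => R i a q.1 q.2).map fun a => (i, a) :: s

theorem mem_transversals {ι β : Type*} [Inhabited β] {Q : ι → List β}
    {R : ι → β → ι → β → Bool} {l : List ι} (hl : l.Nodup) {s : List (ι × β)} :
    s ∈ transversals Q R l ↔ ∃ g : ι → β, (∀ i ∈ l, g i ∈ Q i) ∧
      (l.Pairwise fun i j => R i (g i) j (g j) = true) ∧ s = l.map fun i => (i, g i) := by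
  classical
  induction l generalizing s with
  | nil => simp [transversals]
  | cons i l ih =>
    obtain ⟨hi, hl⟩ := List.nodup_cons.1 hl
    simp only [transversals, List.mem_flatMap, ih hl, List.mem_map, List.mem_filter,
      List.all_eq_true]
    constructor
    · rintro ⟨_, ⟨g, hgQ, hgR, rfl⟩, a, ⟨haQ, haR⟩, rfl⟩
      have hg : ∀ j ∈ l, Function.update g i a j = g j := fun j hj =>
        Function.update_of_ne (by rintro rfl; exact hi hj) _ _
      refine ⟨Function.update g i a, ?_, ?_, ?_⟩
      · intro j hj
        rcases List.mem_cons.1 hj with rfl | hj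
        · simpa using haQ
        · rw [hg j hj]; exact hgQ j hj
      · refine List.pairwise_cons.2 ⟨fun j hj => ?_, hgR.imp_of_mem fun hj hk h => ?_⟩
        · rw [hg j hj, Function.update_self]
          exact haR (j, g j) (List.mem_map.2 ⟨j, hj, rfl⟩)
        · rwa [hg _ hj, hg _ hk]
      · simp only [List.map_cons, Function.update_self, List.cons.injEq, true_and]
        exact List.map_congr_left fun j hj => by rw [hg j hj]
    · rintro ⟨g, hgQ, hgR, rfl⟩
      rw [List.pairwise_cons] at hgR
      refine ⟨_, ⟨g, fun j hj => hgQ j (List.mem_cons_of_mem _ hj), hgR.2, rfl⟩, g i,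
        ⟨hgQ i List.mem_cons_self, ?_⟩, rfl⟩
      intro q hq
      obtain ⟨j, hj, rfl⟩ := List.mem_map.1 hq
      exact hgR.1 j hj

theorem nodup_transversals {ι β : Type*} {Q : ι → List β} {R : ι → β → ι → β → Bool}
    (hQ : ∀ i, (Q i).Nodup) (l : List ι) : (transversals Q R l).Nodup := by
  induction l with
  | nil => simp [transversals]
  | cons i l ih =>
    refine List.nodup_flatMap.2 ⟨fun s _ => ((hQ i).filter _).map fun a b h => ?_, ih.imp ?_⟩
    · simpa using h
    · intro s t hst u hu hu'
      obtain ⟨a, -, rfl⟩ := List.mem_map.1 hu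
      obtain ⟨b, -, h⟩ := List.mem_map.1 hu'
      exact hst (List.cons.inj h).2.symm

/-- The number of ones among the ten lowest binary digits. -/
def popTen (m : ℕ) : ℕ :=
  (m.testBit 0).toNat + (m.testBit 1).toNat + (m.testBit 2).toNat + (m.testBit 3).toNat +
  (m.testBit 4).toNat + (m.testBit 5).toNat + (m.testBit 6).toNat + (m.testBit 7).toNat +
  (m.testBit 8).toNat + (m.testBit 9).toNat

/-- The subset of `Fin 10` with characteristic vector the binary digits of `m`. -/
def bitSet (m : ℕ) : Finset (Fin 10) := univ.filter fun i => m.testBit i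

theorem mem_bitSet {m : ℕ} {i : Fin 10} : i ∈ bitSet m ↔ m.testBit i = true := by
  simp [bitSet]

theorem card_bitSet (m : ℕ) : #(bitSet m) = popTen m := by
  simp only [bitSet, card_filter, Fin.sum_univ_succ, popTen, Bool.toNat]
  simp [Bool.cond_eq_ite, add_assoc]

theorem bitSet_inter (m n : ℕ) : bitSet m ∩ bitSet n = bitSet (m &&& n) := by
  ext i; simp [mem_bitSet]

theorem exists_bitSet_eq (S : Finset (Fin 10)) : ∃ m < 1024, bitSet m = S := by
  refine ⟨Nat.ofBits fun i : Fin 10 => decide (i ∈ S), Nat.ofBits_lt_two_pow _, ?_⟩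
  ext i
  simp [mem_bitSet, Nat.testBit_ofBits_lt _ _ i.2]

theorem bitSet_injOn {m n : ℕ} (hm : m < 1024) (hn : n < 1024) (h : bitSet m = bitSet n) :
    m = n := by
  refine Nat.eq_of_testBit_eq fun i => ?_
  by_cases hi : i < 10
  · have := congrArg ((⟨i, hi⟩ : Fin 10) ∈ ·) h
    simp only [mem_bitSet, eq_iff_iff] at this
    exact Bool.eq_iff_iff.2 this
  · have h2 : 2 ^ 10 ≤ 2 ^ i := Nat.pow_le_pow_right (by norm_num) (by omega)
    rw [Nat.testBit_eq_false_of_lt (by omega), Nat.testBit_eq_false_of_lt (by omega)]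

/-- The neighbourhood functions `C` of the graphs on `Fin 10` that are regular of degree `3`, in
which adjacent vertices have no common neighbour and distinct nonadjacent ones have exactly one. -/
def IsPetersen (C : Fin 10 → Finset (Fin 10)) : Prop :=
  (∀ i, #(C i) = 3 ∧ i ∉ C i) ∧
    ∀ i j, i ≠ j → (j ∈ C i ↔ i ∈ C j) ∧ #(C i ∩ C j) = if j ∈ C i then 0 else 1

/-- Compatibility of the `i`-th and `j`-th neighbourhoods, encoded by their binary digits. -/
def compatible (i : Fin 10) (a : ℕ) (j : Fin 10) (b : ℕ) : Bool :=
  (a.testBit j == b.testBit i) && (popTen (a &&& b) == bif a.testBit j then 0 else 1)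

/-- Encoded candidates for the `i`-th neighbourhood when the zeroth one is `{1, 2, 3}`. -/
def candidates (i : Fin 10) : List ℕ :=
  bif i == 0 then [14] else
    (List.range 1024).filter fun a => !a.testBit i && popTen a == 3 && compatible i a 0 14

/-- The vertices in decreasing order: the enumeration treats the last entry first. -/
def rows : List (Fin 10) :=
  [⟨9, by decide⟩, ⟨8, by decide⟩, ⟨7, by decide⟩, ⟨6, by decide⟩, ⟨5, by decide⟩,
    ⟨4, by decide⟩, ⟨3, by decide⟩, ⟨2, by decide⟩, ⟨1, by decide⟩, ⟨0, by decide⟩]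

set_option maxRecDepth 100000 in
theorem length_transversals :
    (transversals candidates compatible rows).length = 360 := by
  decide +kernel

theorem adjacency_iff_compatible {C : Fin 10 → Finset (Fin 10)} {g : Fin 10 → ℕ}
    (hg : ∀ i, bitSet (g i) = C i) (i j : Fin 10) :
    ((j ∈ C i ↔ i ∈ C j) ∧ #(C i ∩ C j) = if j ∈ C i then 0 else 1) ↔
      compatible i (g i) j (g j) = true := by
  simp only [← hg, bitSet_inter, card_bitSet, mem_bitSet, compatible, Bool.and_eq_true, beq_iff_eq,
    Bool.cond_eq_ite]
  exact and_congr_left' Bool.eq_iff_iff.symm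

theorem nodup_candidates (i : Fin 10) : (candidates i).Nodup := by
  rw [candidates, Bool.cond_eq_ite]
  split_ifs
  · exact List.nodup_singleton _
  · exact List.nodup_range.filter _

theorem bitSet_fourteen : bitSet 14 = {1, 2, 3} := by decide +kernel

theorem mem_candidates_iff {C : Fin 10 → Finset (Fin 10)} {g : Fin 10 → ℕ}
    (hg : ∀ i, bitSet (g i) = C i) (hlt : ∀ i, g i < 1024) (h0 : C 0 = {1, 2, 3}) (i : Fin 10) :
    g i ∈ candidates i ↔ (#(C i) = 3 ∧ i ∉ C i) ∧ (i ≠ 0 → compatible i (g i) 0 (g 0) = true) := by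
  have hg0 : g 0 = 14 :=
    bitSet_injOn (hlt 0) (by norm_num) (by rw [hg, h0, bitSet_fourteen])
  by_cases hi : i = 0
  · subst hi
    simp [candidates, hg0, h0]
  · rw [candidates, beq_false_of_ne hi, cond_false, List.mem_filter, List.mem_range, ← hg i, hg0,
      card_bitSet, mem_bitSet]
    simp only [hlt, true_and, Bool.and_eq_true, Bool.not_eq_true', beq_iff_eq, ne_eq, hi,
      not_false_eq_true, true_imp_iff, Bool.not_eq_true]
    tauto

theorem compatible_symm {i j : Fin 10} {a b : ℕ} (h : compatible i a j b = true) :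
    compatible j b i a = true := by
  simp only [compatible, Bool.and_eq_true, beq_iff_eq] at h ⊢
  exact ⟨h.1.symm, by rw [Nat.land_comm, h.2, h.1]⟩

theorem nodup_rows : rows.Nodup := by decide

theorem mem_rows (i : Fin 10) : i ∈ rows := by revert i; decide

open Classical in
/-- The neighbourhood functions of Petersen graphs in which `0` has the neighbours `S`. -/
def petersenFiber (S : Finset (Fin 10)) : Finset (Fin 10 → Finset (Fin 10)) :=
  univ.filter fun C => IsPetersen C ∧ C 0 = S

theorem mem_petersenFiber {S : Finset (Fin 10)} {C : Fin 10 → Finset (Fin 10)} :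
    C ∈ petersenFiber S ↔ IsPetersen C ∧ C 0 = S := by
  simp [petersenFiber]

attribute [irreducible] petersenFiber

theorem card_petersenFiber_base : #(petersenFiber {1, 2, 3}) = 360 := by
  choose code hlt hcode using exists_bitSet_eq
  let F : (Fin 10 → Finset (Fin 10)) → List (Fin 10 × ℕ) := fun C =>
    rows.map fun i => (i, code (C i))
  have hF : Set.InjOn F (petersenFiber {1, 2, 3}) := by
    intro C _ C' _ h
    funext i
    have := (List.map_inj_left.1 h i (mem_rows i))
    rw [← hcode (C i), (Prod.mk.inj this).2, hcode]
  have himage : (petersenFiber {1, 2, 3}).image F =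
      (transversals candidates compatible rows).toFinset := by
    ext s
    simp only [mem_image, List.mem_toFinset, mem_transversals nodup_rows, mem_petersenFiber]
    constructor
    · rintro ⟨C, ⟨⟨hdeg, hadj⟩, h0⟩, rfl⟩
      have hg : ∀ i, bitSet (code (C i)) = C i := fun i => hcode _
      have hcomp : ∀ i j, i ≠ j → compatible i (code (C i)) j (code (C j)) = true :=
        fun i j hij => (adjacency_iff_compatible hg i j).1 (hadj i j hij)
      refine ⟨fun i => code (C i), fun i _ => ?_, ?_, rfl⟩
      · exact (mem_candidates_iff hg (fun i => hlt _) h0 i).2 ⟨hdeg i, hcomp i 0⟩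
      · exact nodup_rows.imp fun {i j} h => hcomp i j h
    · rintro ⟨g, hgQ, hgR, rfl⟩
      have hglt : ∀ i, g i < 1024 := fun i => by
        have := hgQ i (mem_rows i)
        by_cases hi : i = 0
        · subst hi
          rw [candidates, beq_self_eq_true, cond_true, List.mem_singleton] at this
          omega
        · rw [candidates, beq_false_of_ne hi, cond_false, List.mem_filter, List.mem_range] at this
          exact this.1
      have hg : ∀ i, bitSet (g i) = (fun i => bitSet (g i)) i := fun i => rfl
      have h0 : bitSet (g 0) = {1, 2, 3} := by
        have := hgQ 0 (mem_rows 0)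
        simp only [candidates, beq_self_eq_true, cond_true, List.mem_singleton] at this
        rw [this, bitSet_fourteen]
      have hcomp : ∀ i j, i ≠ j → compatible i (g i) j (g j) = true := fun i j hij =>
        have : Std.Symm fun i j => compatible i (g i) j (g j) = true :=
          ⟨fun _ _ h => compatible_symm h⟩
        hgR.forall (mem_rows i) (mem_rows j) hij
      refine ⟨fun i => bitSet (g i), ⟨⟨fun i => ?_, fun i j hij => ?_⟩, h0⟩, ?_⟩
      · exact ((mem_candidates_iff hg hglt h0 i).1 (hgQ i (mem_rows i))).1
      · exact (adjacency_iff_compatible hg i j).2 (hcomp i j hij)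
      · refine List.map_congr_left fun i _ => ?_
        rw [bitSet_injOn (hlt _) (hglt i) (hcode _)]
  rw [← card_image_of_injOn hF, himage,
    List.toFinset_card_of_nodup (nodup_transversals nodup_candidates _), length_transversals]

/-- The neighbourhood function of the graph relabelled by `σ`. -/
def relabel (σ : Equiv.Perm (Fin 10)) (C : Fin 10 → Finset (Fin 10)) :
    Fin 10 → Finset (Fin 10) :=
  fun i => (C (σ.symm i)).map σ.toEmbedding

theorem IsPetersen.relabel {C : Fin 10 → Finset (Fin 10)} (hC : IsPetersen C)
    (σ : Equiv.Perm (Fin 10)) : IsPetersen (relabel σ C) := by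
  have hmem : ∀ i j, j ∈ _root_.relabel σ C i ↔ σ.symm j ∈ C (σ.symm i) := fun i j => by
    simp [_root_.relabel, mem_map_equiv]
  refine ⟨fun i => ⟨?_, ?_⟩, fun i j hij => ⟨?_, ?_⟩⟩
  · simpa [_root_.relabel] using (hC.1 (σ.symm i)).1
  · rw [hmem]; exact (hC.1 (σ.symm i)).2
  · rw [hmem, hmem]; exact (hC.2 _ _ (σ.symm.injective.ne hij)).1
  · simp only [hmem]
    rw [← (hC.2 _ _ (σ.symm.injective.ne hij)).2]
    simp only [_root_.relabel, ← map_inter, card_map]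

theorem relabel_injective (σ : Equiv.Perm (Fin 10)) : Function.Injective (relabel σ) := by
  intro C C' h
  funext i
  have := congrFun h (σ i)
  simpa [relabel] using this

theorem card_petersenFiber_le (σ : Equiv.Perm (Fin 10)) (hσ : σ 0 = 0) (S : Finset (Fin 10)) :
    #(petersenFiber S) ≤ #(petersenFiber (S.map σ.toEmbedding)) := by
  refine card_le_card_of_injOn (relabel σ) (fun C hC => ?_) (relabel_injective σ).injOn
  rw [mem_coe, mem_petersenFiber] at hC ⊢
  obtain ⟨hC, rfl⟩ := hC
  refine ⟨hC.relabel σ, ?_⟩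
  rw [relabel, (Equiv.symm_apply_eq σ).2 hσ.symm]

theorem exists_perm_map_eq {S : Finset (Fin 10)} (hS : #S = 3) (h0 : 0 ∉ S) :
    ∃ σ : Equiv.Perm (Fin 10), σ 0 = 0 ∧ ({1, 2, 3} : Finset (Fin 10)).map σ.toEmbedding = S := by
  obtain ⟨a, b, c, hab, hac, hbc, rfl⟩ := card_eq_three.1 hS
  simp only [mem_insert, mem_singleton, not_or] at h0
  let u : Fin 4 ↪ Fin 10 := ⟨![0, 1, 2, 3], by decide⟩
  let v : Fin 4 ↪ Fin 10 := ⟨![0, a, b, c], by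
    intro i j
    fin_cases i <;> fin_cases j <;> simp_all [eq_comm]⟩
  obtain ⟨σ, hσ⟩ := (Equiv.Perm.isMultiplyPretransitive (Fin 10) 4).exists_smul_eq u v
  have h : ∀ i, σ (u i) = v i := fun i => by
    rw [← hσ]; rfl
  have h1 : σ 1 = a := h 1
  have h2 : σ 2 = b := h 2
  have h3 : σ 3 = c := h 3
  exact ⟨σ, h 0, by simp [h1, h2, h3]⟩

theorem card_petersenFiber {S : Finset (Fin 10)} (hS : #S = 3) (h0 : 0 ∉ S) :
    #(petersenFiber S) = 360 := by
  obtain ⟨σ, hσ, rfl⟩ := exists_perm_map_eq hS h0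
  rw [← card_petersenFiber_base]
  refine le_antisymm ?_ (card_petersenFiber_le σ hσ _)
  have := card_petersenFiber_le σ.symm ((Equiv.symm_apply_eq σ).2 hσ.symm)
    (({1, 2, 3} : Finset (Fin 10)).map σ.toEmbedding)
  rwa [map_map, show σ.toEmbedding.trans σ.symm.toEmbedding = Function.Embedding.refl _ by
    ext; simp, map_refl] at this

theorem ncard_isPetersen : {C | IsPetersen C}.ncard = 30240 := by
  classical
  have hunion : (powersetCard 3 (univ.erase (0 : Fin 10))).biUnion petersenFiber =
      univ.filter IsPetersen := by
    ext C
    simp only [mem_biUnion, mem_petersenFiber, mem_filter, mem_univ, true_and]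
    refine ⟨fun ⟨_, _, hC, _⟩ => hC, fun hC =>
      ⟨C 0, mem_powersetCard.2 ⟨fun i hi => ?_, ?_⟩, hC, rfl⟩⟩
    · exact mem_erase.2 ⟨by rintro rfl; exact (hC.1 0).2 hi, mem_univ _⟩
    · exact (hC.1 0).1
  have hset : {C | IsPetersen C} = ((univ.filter IsPetersen : Finset _) : Set _) := by
    rw [coe_filter]
    simp only [mem_univ, true_and]
  rw [hset, Set.ncard_coe_finset, ← hunion, card_biUnion, sum_congr rfl (g := fun _ => 360)]
  · rw [sum_const, card_powersetCard, card_erase_of_mem (mem_univ _), card_univ, Fintype.card_fin]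
    decide
  · intro S hS
    rw [mem_powersetCard] at hS
    exact card_petersenFiber hS.2 fun h => notMem_erase _ _ (hS.1 h)
  · intro S _ S' _ hne
    refine disjoint_left.2 fun C hC hC' => hne ?_
    rw [← (mem_petersenFiber.1 hC).2, (mem_petersenFiber.1 hC').2]

/-- The inner products with `x 1, …, x 10` of the element of `Y1set x` with index of inner product
`α2` equal to `p` and indices of inner product `α3` forming `T`, indices shifted to `Fin 10`. -/
def profile (p : Fin 10) (T : Finset (Fin 10)) (i : Fin 10) : ℝ :=
  if i = p then α2 else if i ∈ T then α3 else α1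

theorem profile_eq {p : Fin 10} {T : Finset (Fin 10)} (hp : p ∉ T) (i : Fin 10) :
    profile p T i = 4 / 15 - 11 / 30 * (if i = p then 1 else 0) -
      11 / 15 * (if i ∈ T then 1 else 0) := by
  unfold profile α1 α2 α3
  split_ifs with h1 h2 h2
  · exact absurd (h1 ▸ h2) hp
  all_goals norm_num

theorem sum_profile {p : Fin 10} {T : Finset (Fin 10)} (hT : #T = 3) (hp : p ∉ T) :
    ∑ i, profile p T i = 1 / 10 := by
  simp only [profile_eq hp, sum_sub_distrib, ← mul_sum, sum_ite_mem, univ_inter,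
    sum_ite_eq', mem_univ, if_true, sum_const, card_univ, Fintype.card_fin, hT]
  norm_num

theorem sum_profile_mul_profile {p p' : Fin 10} {T T' : Finset (Fin 10)} (hT : #T = 3)
    (hT' : #T' = 3) (hp : p ∉ T) (hp' : p' ∉ T') :
    ∑ i, profile p T i * profile p' T' i = -12 / 100 + 121 / 900 * (-4 +
      (if p = p' then 1 else 0) + 2 * (if p ∈ T' then 1 else 0) + 2 * (if p' ∈ T then 1 else 0) +
        4 * #(T ∩ T')) := by
  have e : ∀ i, profile p T i * profile p' T' i = 16 / 225
      - 44 / 450 * (if i = p then 1 else 0) - 44 / 450 * (if i = p' then 1 else 0)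
      - 44 / 225 * (if i ∈ T then 1 else 0) - 44 / 225 * (if i ∈ T' then 1 else 0)
      + 121 / 900 * (if i = p then if p = p' then 1 else 0 else 0)
      + 121 / 450 * (if i = p then if p ∈ T' then 1 else 0 else 0)
      + 121 / 450 * (if i = p' then if p' ∈ T then 1 else 0 else 0)
      + 121 / 225 * (if i ∈ T ∩ T' then 1 else 0) := by
    intro i
    simp only [profile_eq hp, profile_eq hp', mem_inter]
    by_cases h1 : i = p
    · subst h1
      by_cases h2 : i = p'
      · subst h2
        simp [hp, hp']; norm_num
      · by_cases h4 : i ∈ T' <;> simp [h2, h4, hp] <;> norm_num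
    · by_cases h2 : i = p'
      · subst h2
        by_cases h3 : i ∈ T <;> simp [h1, h3, hp'] <;> norm_num
      · by_cases h3 : i ∈ T <;> by_cases h4 : i ∈ T' <;> simp [h1, h2, h3, h4] <;> norm_num
  simp only [e, sum_add_distrib, sum_sub_distrib, ← mul_sum, sum_ite_mem, univ_inter,
    sum_ite_eq', mem_univ, if_true, sum_const, card_univ, Fintype.card_fin, hT, hT', nsmul_eq_mul]
  push_cast
  ring

theorem IsRegularSimplex.inner_eq {x : Fin 11 → EuclideanSpace ℝ (Fin 10)} (hx : IsRegularSimplex x)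
    (i j : Fin 11) :
    ⟪x i, x j⟫ = 11 / 10 * (if i = j then 1 else 0) - 1 / 10 := by
  split_ifs with h
  · subst h
    rw [real_inner_self_eq_norm_sq, hx.1]; norm_num
  · rw [hx.2 i j h]; norm_num

theorem IsRegularSimplex.inner_sum {x : Fin 11 → EuclideanSpace ℝ (Fin 10)} (hx : IsRegularSimplex x)
    (c : Fin 11 → ℝ) (j : Fin 11) :
    ⟪x j, ∑ i, c i • x i⟫ = 11 / 10 * c j - 1 / 10 * ∑ i, c i := by
  simp only [_root_.inner_sum, inner_smul_right, hx.inner_eq, mul_sub, sum_sub_distrib, mul_ite,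
    mul_one, mul_zero, sum_ite_eq, mem_univ, if_true, ← sum_mul]
  ring

theorem IsRegularSimplex.eq_of_inner_eq {x : Fin 11 → EuclideanSpace ℝ (Fin 10)} (hx : IsRegularSimplex x)
    {y z : EuclideanSpace ℝ (Fin 10)}
    (h : ∀ i, ⟪x i, y⟫ = ⟪x i, z⟫) : y = z := by
  have hli : LinearIndependent ℝ fun i : Fin 10 => x i.succ := by
    rw [Fintype.linearIndependent_iff]
    intro c hc
    have hsum : ∑ i, (Fin.cons 0 c : Fin 11 → ℝ) i • x i = 0 := by
      simpa [Fin.sum_univ_succ (n := 10)] using hc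
    have key : ∀ j : Fin 11, 11 / 10 * (Fin.cons 0 c : Fin 11 → ℝ) j - 1 / 10 * ∑ i, c i = 0 := by
      intro j
      have := hx.inner_sum (Fin.cons 0 c) j
      rw [hsum, inner_zero_right, Fin.sum_univ_succ] at this
      simpa using this.symm
    have h0 := key 0
    intro i
    have hi := key i.succ
    simp only [Fin.cons_zero, Fin.cons_succ] at h0 hi
    linarith
  have htop := hli.span_eq_top_of_card_eq_finrank' (by simp)
  rw [← sub_eq_zero, ← inner_self_eq_zero (𝕜 := ℝ)]
  have hmem : y - z ∈ Submodule.span ℝ (Set.range fun i : Fin 10 => x i.succ) := by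
    rw [htop]; trivial
  refine Submodule.span_induction (p := fun v _ => ⟪v, y - z⟫ = 0) ?_ ?_ ?_ ?_ hmem
  · rintro _ ⟨i, rfl⟩
    rw [inner_sub_right, h, sub_self]
  · exact inner_zero_left _
  · intro u v _ _ hu hv
    rw [inner_add_left, hu, hv, add_zero]
  · intro a u _ hu
    rw [inner_smul_left, hu, mul_zero]

/-- The vector of `Y1set x` with the given inner product profile. -/
def profileVector (x : Fin 11 → EuclideanSpace ℝ (Fin 10)) (p : Fin 10) (T : Finset (Fin 10)) :
    EuclideanSpace ℝ (Fin 10) :=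
  ∑ i, (10 / 11 * (Fin.cons α2 (profile p T) : Fin 11 → ℝ) i) • x i

theorem inner_profileVector {x : Fin 11 → EuclideanSpace ℝ (Fin 10)} (hx : IsRegularSimplex x)
    {p : Fin 10} {T : Finset (Fin 10)}
    (hT : #T = 3) (hp : p ∉ T) (j : Fin 11) :
    ⟪x j, profileVector x p T⟫ = (Fin.cons α2 (profile p T) : Fin 11 → ℝ) j := by
  rw [profileVector, hx.inner_sum, ← mul_sum, Fin.sum_univ_succ]
  simp only [Fin.cons_zero, Fin.cons_succ, sum_profile hT hp, α2]
  ring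

theorem inner_profileVector_profileVector {x : Fin 11 → EuclideanSpace ℝ (Fin 10)} (hx : IsRegularSimplex x)
    {p p' : Fin 10} {T T' : Finset (Fin 10)}
    (hT : #T = 3) (hT' : #T' = 3) (hp : p ∉ T)
    (hp' : p' ∉ T') :
    ⟪profileVector x p T, profileVector x p' T'⟫ = -1 / 10 + 11 / 90 * (-4 +
      (if p = p' then 1 else 0) + 2 * (if p ∈ T' then 1 else 0) + 2 * (if p' ∈ T then 1 else 0) +
        4 * #(T ∩ T')) := by
  conv_lhs => rw [profileVector]
  simp only [sum_inner, inner_smul_left, inner_profileVector hx hT' hp', mul_assoc,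
    map_mul, RCLike.conj_to_real, ← mul_sum]
  rw [Fin.sum_univ_succ]
  simp only [Fin.cons_zero, Fin.cons_succ, sum_profile_mul_profile hT hT' hp hp', α2]
  ring

theorem inner_profileVector_eq_iff {x : Fin 11 → EuclideanSpace ℝ (Fin 10)} (hx : IsRegularSimplex x)
    {p p' : Fin 10} {T T' : Finset (Fin 10)}
    (hT : #T = 3) (hT' : #T' = 3) (hp : p ∉ T) (hp' : p' ∉ T') :
    ⟪profileVector x p T, profileVector x p' T'⟫ = α2 ↔
      p ≠ p' ∧ (p' ∈ T ↔ p ∈ T') ∧ #(T ∩ T') = if p' ∈ T then 0 else 1 := by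
  have hcast : ⟪profileVector x p T, profileVector x p' T'⟫ = α2 ↔
      (if p = p' then 1 else 0) + 2 * (if p ∈ T' then 1 else 0) + 2 * (if p' ∈ T then 1 else 0) +
        4 * #(T ∩ T') = 4 := by
    rw [inner_profileVector_profileVector hx hT hT' hp hp', α2, ← Nat.cast_inj (R := ℝ)]
    push_cast
    constructor <;> intro h <;> linarith
  rw [hcast]
  split_ifs <;> simp_all <;> omega

theorem profileVector_mem_Y1set {x : Fin 11 → EuclideanSpace ℝ (Fin 10)} (hx : IsRegularSimplex x)
    {p : Fin 10} {T : Finset (Fin 10)}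
    (hT : #T = 3) (hp : p ∉ T) : profileVector x p T ∈ Y1set x := by
  have hset : ∀ a : ℝ, {i : Fin 11 | i ≠ 0 ∧ ⟪x i, profileVector x p T⟫ = a} =
      Set.image Fin.succ {i : Fin 10 | profile p T i = a} := by
    intro a
    ext i
    refine Fin.cases ?_ (fun i => ?_) i
    · simp
    · simp [inner_profileVector hx hT hp]
  refine ⟨?_, ?_, ?_, ?_, ?_⟩
  · have h := inner_profileVector_profileVector hx hT hT hp hp
    rw [real_inner_self_eq_norm_sq] at h
    have h1 : ‖profileVector x p T‖ ^ 2 = 1 := by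
      rw [h]; simp [hp, hT]; norm_num
    exact (pow_eq_one_iff_of_nonneg (norm_nonneg _) two_ne_zero).1 h1
  · simpa using inner_profileVector hx hT hp 0
  · rw [hset, Set.ncard_image_of_injective _ (Fin.succ_injective _),
      show {i | profile p T i = α1} = ((insert p T)ᶜ : Finset (Fin 10)) by
        ext i
        simp only [profile, α1, α2, α3, Set.mem_ofPred_eq]
        split_ifs <;> simp_all <;> norm_num,
      Set.ncard_coe_finset, card_compl, card_insert_of_notMem hp, hT, Fintype.card_fin]
  · rw [hset, Set.ncard_image_of_injective _ (Fin.succ_injective _),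
      show {i | profile p T i = α2} = {p} by
        ext i
        simp only [profile, α1, α2, α3, Set.mem_ofPred_eq]
        split_ifs <;> simp_all <;> norm_num,
      Set.ncard_singleton]
  · rw [hset, Set.ncard_image_of_injective _ (Fin.succ_injective _),
      show {i | profile p T i = α3} = (T : Set (Fin 10)) by
        ext i
        simp only [profile, α1, α2, α3, Set.mem_ofPred_eq]
        split_ifs <;> simp_all <;> norm_num,
      Set.ncard_coe_finset, hT]

theorem exists_eq_profileVector {x : Fin 11 → EuclideanSpace ℝ (Fin 10)} (hx : IsRegularSimplex x)
    {y : EuclideanSpace ℝ (Fin 10)} (hy : y ∈ Y1set x) :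
    ∃ p T, #T = 3 ∧ p ∉ T ∧ y = profileVector x p T := by
  classical
  obtain ⟨-, h0, h1, h2, h3⟩ := hy
  let A : ℝ → Finset (Fin 10) := fun a => univ.filter fun i => ⟪x i.succ, y⟫ = a
  have hA : ∀ a i, i ∈ A a ↔ ⟪x i.succ, y⟫ = a := fun a i => by simp [A]
  have hcard : ∀ a, {i : Fin 11 | i ≠ 0 ∧ ⟪x i, y⟫ = a}.ncard = #(A a) := by
    intro a
    rw [show {i : Fin 11 | i ≠ 0 ∧ ⟪x i, y⟫ = a} = Set.image Fin.succ (A a : Set (Fin 10)) by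
      ext i
      refine Fin.cases ?_ (fun i => ?_) i <;> simp [hA],
      Set.ncard_image_of_injective _ (Fin.succ_injective _), Set.ncard_coe_finset]
  rw [hcard] at h1 h2 h3
  have hdisj : ∀ a b, a ≠ b → Disjoint (A a) (A b) := fun a b hab =>
    disjoint_left.2 fun i hi hi' => hab (by rw [← (hA a i).1 hi, (hA b i).1 hi'])
  have h12 : α1 ≠ α2 := by norm_num [α1, α2]
  have h13 : α1 ≠ α3 := by norm_num [α1, α3]
  have h23 : α2 ≠ α3 := by norm_num [α2, α3]
  have hcover : A α1 ∪ A α2 ∪ A α3 = univ := by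
    rw [← card_eq_iff_eq_univ, card_union_of_disjoint
      (disjoint_union_left.2 ⟨hdisj _ _ h13, hdisj _ _ h23⟩),
      card_union_of_disjoint (hdisj _ _ h12), h1, h2, h3, Fintype.card_fin]
  obtain ⟨p, hp⟩ := card_eq_one.1 h2
  have hpmem : ∀ i, ⟪x i.succ, y⟫ = α2 ↔ i = p := fun i => by
    rw [← hA, hp, mem_singleton]
  have hpT : p ∉ A α3 := fun h =>
    h23 (((hpmem p).2 rfl).symm.trans ((hA _ _).1 h))
  refine ⟨p, A α3, h3, hpT, hx.eq_of_inner_eq fun i => ?_⟩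
  rw [inner_profileVector hx h3 hpT]
  refine Fin.cases ?_ (fun i => ?_) i
  · simpa using h0
  · rw [Fin.cons_succ, profile]
    split_ifs with hip hiT
    · exact (hpmem i).2 hip
    · exact (hA _ _).1 hiT
    · have := hcover ▸ mem_univ i
      simp only [mem_union, hiT, or_false] at this
      rcases this with h | h
      · exact (hA _ _).1 h
      · exact absurd ((hpmem i).1 ((hA _ _).1 h)) hip

theorem profileVector_injective {x : Fin 11 → EuclideanSpace ℝ (Fin 10)} (hx : IsRegularSimplex x)
    {p p' : Fin 10} {T T' : Finset (Fin 10)}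
    (hT : #T = 3) (hT' : #T' = 3) (hp : p ∉ T) (hp' : p' ∉ T')
    (h : profileVector x p T = profileVector x p' T') : p = p' ∧ T = T' := by
  have key : ∀ i, profile p T i = profile p' T' i := fun i => by
    have := inner_profileVector hx hT hp i.succ
    rw [h, inner_profileVector hx hT' hp'] at this
    simpa using this.symm
  have hpp : p = p' := by
    have := key p
    simp only [profile, α1, α2, α3] at this
    by_contra hne
    simp only [if_true, if_neg hne] at this
    split_ifs at this <;> norm_num at this
  refine ⟨hpp, ?_⟩
  subst hpp
  ext i
  have := key i
  simp only [profile, α1, α2, α3] at this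
  split_ifs at this <;> first | (norm_num at this; done) | simp_all

theorem isClique10_range {x : Fin 11 → EuclideanSpace ℝ (Fin 10)} (hx : IsRegularSimplex x)
    {C : Fin 10 → Finset (Fin 10)} (hC : IsPetersen C) :
    IsClique10 x (Set.range fun i => profileVector x i (C i)) := by
  refine ⟨?_, ?_, ?_⟩
  · rintro _ ⟨i, rfl⟩
    exact profileVector_mem_Y1set hx (hC.1 i).1 (hC.1 i).2
  · have hinj : Function.Injective fun i => profileVector x i (C i) := fun i j h =>
      (profileVector_injective hx (hC.1 i).1 (hC.1 j).1 (hC.1 i).2 (hC.1 j).2 h).1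
    rw [← Set.image_univ, Set.ncard_image_of_injective _ hinj, Set.ncard_univ,
      Nat.card_eq_fintype_card, Fintype.card_fin]
  · rintro _ ⟨i, rfl⟩ _ ⟨j, rfl⟩ hne
    have hij : i ≠ j := fun h => hne (by rw [h])
    exact (inner_profileVector_eq_iff hx (hC.1 i).1 (hC.1 j).1 (hC.1 i).2 (hC.1 j).2).2
      ⟨hij, hC.2 i j hij⟩

theorem IsClique10.exists_isPetersen {x : Fin 11 → EuclideanSpace ℝ (Fin 10)} (hx : IsRegularSimplex x)
    {D : Set (EuclideanSpace ℝ (Fin 10))}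
    (hD : IsClique10 x D) :
    ∃ C, IsPetersen C ∧ (Set.range fun i => profileVector x i (C i)) = D := by
  obtain ⟨hsub, hcard, hadj⟩ := hD
  have : Finite D := Set.finite_of_ncard_pos (by omega)
  choose p T hT hpT hy using fun y : D => exists_eq_profileVector hx (hsub y.2)
  have hadj' : ∀ y z : D, y ≠ z → p y ≠ p z ∧ (p z ∈ T y ↔ p y ∈ T z) ∧
      #(T y ∩ T z) = if p z ∈ T y then 0 else 1 := fun y z hne => by
    rw [← inner_profileVector_eq_iff hx (hT y) (hT z) (hpT y) (hpT z), ← hy, ← hy]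
    exact hadj y y.2 z z.2 (Subtype.coe_injective.ne hne)
  have hinj : Function.Injective p := fun y z h => by
    by_contra hne
    exact (hadj' y z hne).1 h
  have hbij : Function.Bijective p := by
    refine (Nat.bijective_iff_injective_and_card p).2 ⟨hinj, ?_⟩
    rw [Nat.card_coe_set_eq, hcard, Nat.card_eq_fintype_card, Fintype.card_fin]
  let e := Equiv.ofBijective p hbij
  have he : ∀ i, p (e.symm i) = i := e.apply_symm_apply
  refine ⟨fun i => T (e.symm i), ⟨fun i => ⟨hT _, ?_⟩, fun i j hij => ?_⟩, ?_⟩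
  · have := hpT (e.symm i)
    rwa [he] at this
  · have := (hadj' _ _ (e.symm.injective.ne hij)).2
    rwa [he, he] at this
  · have hval : (fun i => profileVector x i (T (e.symm i))) = Subtype.val ∘ e.symm := by
      funext i
      have := hy (e.symm i)
      rw [he] at this
      exact this.symm
    rw [hval, e.symm.surjective.range_comp, Subtype.range_coe]

/-- The graph on `Y1` contains exactly 30240 cliques of order 10. -/
theorem card_cliques10_eq (x : Fin 11 → EuclideanSpace ℝ (Fin 10))
    (hx : IsRegularSimplex x) :
    {D : Set (EuclideanSpace ℝ (Fin 10)) | IsClique10 x D}.ncard = 30240 := by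
  rw [← ncard_isPetersen]
  symm
  refine Set.ncard_congr (fun C _ => Set.range fun i => profileVector x i (C i))
    (fun C hC => isClique10_range hx hC) (fun C C' hC hC' h => ?_)
    (fun D hD => by simpa using hD.exists_isPetersen hx)
  funext i
  obtain ⟨j, hj⟩ := (Set.ext_iff.1 h (profileVector x i (C i))).1 ⟨i, rfl⟩
  obtain ⟨rfl, hij⟩ :=
    profileVector_injective hx (hC'.1 j).1 (hC.1 i).1 (hC'.1 j).2 (hC.1 i).2 hj
  exact hij.symm
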